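/- Let M be a quasianalytic derivation closed weight sequence such that m_k := M_k/k! is log-convex and m_k^{1/k} → ∞. Then the ring of germs at 0 ∈ ℝ of complex-valued E^{(M)}-functions has property (D): for every function f defined on an open neighborhood of 0 in ℝ and every integer j ≥ 1, if f^j and f^{j+1} are of class E^{(M)} on some open neighborhood of 0, then f is of class E^{(M)} on some open neighborhood of 0. -/

import Mathlib

open Filter Set Asymptotics MeasureTheory

noncomputable section

/-- `M` is a weight sequence: `M 0 = 1`, positive, `M 1 ≥ 1`, log-convex and
`M k ^ (1/k) → ∞`. -/
def IsWeightSeq (M : ℕ → ℝ) : Prop :=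
  M 0 = 1 ∧ (∀ k, 0 < M k) ∧ 1 ≤ M 1 ∧
    (∀ k : ℕ, 1 ≤ k → M k ^ 2 ≤ M (k - 1) * M (k + 1)) ∧
    Tendsto (fun k : ℕ => M k ^ (1 / (k : ℝ))) atTop atTop

/-- The sequence `m k = M k / k!`. -/
def mseq (M : ℕ → ℝ) : ℕ → ℝ := fun k => M k / (Nat.factorial k : ℝ)

/-- Log-convexity of a sequence. -/
def LogConvexSeq (m : ℕ → ℝ) : Prop := ∀ k : ℕ, 1 ≤ k → m k ^ 2 ≤ m (k - 1) * m (k + 1)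

/-- `m k ^ (1/k) → ∞`. -/
def RootTendsToInfty (m : ℕ → ℝ) : Prop :=
  Tendsto (fun k : ℕ => m k ^ (1 / (k : ℝ))) atTop atTop

/-- Moderate growth of a sequence. -/
def ModerateGrowth (M : ℕ → ℝ) : Prop :=
  ∃ C : ℝ, 0 < C ∧ ∀ j k : ℕ, M (j + k) ≤ C ^ (j + k) * M j * M k

/-- Derivation closedness of a sequence. -/
def DerivClosed (M : ℕ → ℝ) : Prop :=
  ∃ C : ℝ, 0 < C ∧ ∀ k : ℕ, M (k + 1) ≤ C ^ (k + 1) * M k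

/-- Non-quasianalyticity: `∑_{k≥1} M (k-1) / M k = ∑_{k≥1} 1/μ_k < ∞`. -/
def NonQuasianalytic (M : ℕ → ℝ) : Prop := Summable fun k : ℕ => M k / M (k + 1)

/-- Quasianalyticity: `∑_{k≥1} 1/μ_k = ∞`. -/
def Quasianalytic (M : ℕ → ℝ) : Prop := ¬ NonQuasianalytic M

/-- The associated function `h_m (t) = inf_k m k * t ^ k`. -/
def hFun (m : ℕ → ℝ) (t : ℝ) : ℝ := ⨅ k : ℕ, m k * t ^ k

/-- `Γ̄_m (t) = min {k | h_m t = m k * t ^ k}`. -/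
def GammaBar (m : ℕ → ℝ) (t : ℝ) : ℕ := sInf {k : ℕ | hFun m t = m k * t ^ k}

/-- `Γ̲_m (t) = min {k | m (k+1) / m k ≥ 1 / t}`. -/
def GammaLow (m : ℕ → ℝ) (t : ℝ) : ℕ := sInf {k : ℕ | 1 / t ≤ m (k + 1) / m k}

/-- The set whose supremum is `mg (M, N)`. -/
def mgSet (M N : ℕ → ℝ) : Set ℝ :=
  {x | ∃ j k : ℕ, 1 ≤ j + k ∧ x = (M (j + k) / (N j * N k)) ^ (1 / (j + k : ℝ))}

/-- `mg (M, N) = sup_{j+k ≥ 1} (M (j+k) / (N j * N k)) ^ (1/(j+k))`. -/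
def mg (M N : ℕ → ℝ) : ℝ := sSup (mgSet M N)

/-- `mg (M, N) < ∞`. -/
def MgFinite (M N : ℕ → ℝ) : Prop := BddAbove (mgSet M N)

/-- A weight sequence is regular: `m k ^ (1/k) → ∞`, derivation closed, and
`Γ̄_m (C t) ≤ Γ̲_m t` for some `C ≥ 1`. -/
def RegularWS (M : ℕ → ℝ) : Prop :=
  RootTendsToInfty (mseq M) ∧ DerivClosed M ∧
    ∃ C : ℝ, 1 ≤ C ∧ ∀ t : ℝ, 0 < t → GammaBar (mseq M) (C * t) ≤ GammaLow (mseq M) t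

/-- `f` is of class `E^{M}` (Roumieu) on the open set `U`. -/
def RoumieuOn {E : Type*} [NormedAddCommGroup E] [NormedSpace ℝ E]
    (M : ℕ → ℝ) (f : E → ℂ) (U : Set E) : Prop :=
  ContDiffOn ℝ (⊤ : ℕ∞) f U ∧
    ∀ V : Set E, IsOpen V → IsCompact (closure V) → closure V ⊆ U →
      ∃ C σ : ℝ, 0 < C ∧ 0 < σ ∧
        ∀ x ∈ V, ∀ k : ℕ, ‖iteratedFDerivWithin ℝ k f U x‖ ≤ C * σ ^ k * M k

/-- `f` is of class `E^{(M)}` (Beurling) on the open set `U`. -/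
def BeurlingOn {E : Type*} [NormedAddCommGroup E] [NormedSpace ℝ E]
    (M : ℕ → ℝ) (f : E → ℂ) (U : Set E) : Prop :=
  ContDiffOn ℝ (⊤ : ℕ∞) f U ∧
    ∀ V : Set E, IsOpen V → IsCompact (closure V) → closure V ⊆ U →
      ∀ σ : ℝ, 0 < σ → ∃ C : ℝ, 0 < C ∧
        ∀ x ∈ V, ∀ k : ℕ, ‖iteratedFDerivWithin ℝ k f U x‖ ≤ C * σ ^ k * M k

/-- A weight matrix: a nonempty, pointwise totally ordered family of weight sequences. -/
def IsWeightMatrix (W : Set (ℕ → ℝ)) : Prop :=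
  W.Nonempty ∧ (∀ M ∈ W, IsWeightSeq M) ∧
    ∀ M ∈ W, ∀ N ∈ W, (∀ k, M k ≤ N k) ∨ (∀ k, N k ≤ M k)

/-- R-regularity of a weight matrix. -/
def RRegular (W : Set (ℕ → ℝ)) : Prop :=
  (∀ M ∈ W, RootTendsToInfty (mseq M)) ∧
    (∀ M ∈ W, ∃ N ∈ W, ∃ C : ℝ, 1 ≤ C ∧ ∀ j : ℕ, M (j + 1) ≤ C ^ (j + 1) * N j) ∧
    (∀ M ∈ W, ∃ N ∈ W, ∃ C : ℝ, 1 ≤ C ∧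
      ∀ t : ℝ, 0 < t → GammaBar (mseq N) (C * t) ≤ GammaLow (mseq M) t)

/-- B-regularity of a weight matrix. -/
def BRegular (W : Set (ℕ → ℝ)) : Prop :=
  (∀ M ∈ W, RootTendsToInfty (mseq M)) ∧
    (∀ M ∈ W, ∃ N ∈ W, ∃ C : ℝ, 1 ≤ C ∧ ∀ j : ℕ, N (j + 1) ≤ C ^ j * M j) ∧
    (∀ M ∈ W, ∃ N ∈ W, ∃ C : ℝ, 1 ≤ C ∧
      ∀ t : ℝ, 0 < t → GammaBar (mseq M) (C * t) ≤ GammaLow (mseq N) t)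

/-- R-moderate growth of a weight matrix. -/
def RModerateGrowth (W : Set (ℕ → ℝ)) : Prop := ∀ M ∈ W, ∃ N ∈ W, MgFinite M N

/-- B-moderate growth of a weight matrix. -/
def BModerateGrowth (W : Set (ℕ → ℝ)) : Prop := ∀ M ∈ W, ∃ N ∈ W, MgFinite N M

/-- `f` is of class `E^{W}` (Roumieu, weight matrix) on the open set `U`. -/
def MatrixRoumieuOn {E : Type*} [NormedAddCommGroup E] [NormedSpace ℝ E]
    (W : Set (ℕ → ℝ)) (f : E → ℂ) (U : Set E) : Prop :=
  ContDiffOn ℝ (⊤ : ℕ∞) f U ∧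
    ∀ V : Set E, IsOpen V → IsCompact (closure V) → closure V ⊆ U →
      ∃ M ∈ W, ∃ C σ : ℝ, 0 < C ∧ 0 < σ ∧
        ∀ x ∈ V, ∀ k : ℕ, ‖iteratedFDerivWithin ℝ k f U x‖ ≤ C * σ ^ k * M k

/-- `f` is of class `E^{(W)}` (Beurling, weight matrix) on the open set `U`. -/
def MatrixBeurlingOn {E : Type*} [NormedAddCommGroup E] [NormedSpace ℝ E]
    (W : Set (ℕ → ℝ)) (f : E → ℂ) (U : Set E) : Prop :=
  ContDiffOn ℝ (⊤ : ℕ∞) f U ∧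
    ∀ V : Set E, IsOpen V → IsCompact (closure V) → closure V ⊆ U →
      ∀ M ∈ W, ∀ σ : ℝ, 0 < σ → ∃ C : ℝ, 0 < C ∧
        ∀ x ∈ V, ∀ k : ℕ, ‖iteratedFDerivWithin ℝ k f U x‖ ≤ C * σ ^ k * M k

/-- `ω` is a weight function. -/
def IsWeightFunction (ω : ℝ → ℝ) : Prop :=
  ContinuousOn ω (Ici 0) ∧ MonotoneOn ω (Ici 0) ∧ (∀ t ∈ Ici (0 : ℝ), 0 ≤ ω t) ∧
    ((fun t => ω (2 * t)) =O[atTop] ω) ∧ (ω =o[atTop] fun t : ℝ => t) ∧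
    ((fun t => Real.log t) =o[atTop] ω) ∧ ConvexOn ℝ (Ici 0) fun t => ω (Real.exp t)

/-- The Young conjugate `φ*_ω (s) = sup_{t ≥ 0} (s t - ω (e^t))`. -/
def phiStar (ω : ℝ → ℝ) (s : ℝ) : ℝ := sSup ((fun t => s * t - ω (Real.exp t)) '' Ici 0)

/-- Non-quasianalyticity of a weight function. -/
def NonQuasianalyticW (ω : ℝ → ℝ) : Prop := IntegrableOn (fun t => ω t / t ^ 2) (Ici 1)

/-- `f` is of class `E^{ω}` (Roumieu) on the open set `U`. -/
def OmegaRoumieuOn {E : Type*} [NormedAddCommGroup E] [NormedSpace ℝ E]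
    (ω : ℝ → ℝ) (f : E → ℂ) (U : Set E) : Prop :=
  ContDiffOn ℝ (⊤ : ℕ∞) f U ∧
    ∀ V : Set E, IsOpen V → IsCompact (closure V) → closure V ⊆ U →
      ∃ C ρ : ℝ, 0 < C ∧ 0 < ρ ∧
        ∀ x ∈ V, ∀ k : ℕ,
          ‖iteratedFDerivWithin ℝ k f U x‖ ≤ C * Real.exp (phiStar ω (ρ * k) / ρ)

/-- `f` is of class `E^{(ω)}` (Beurling) on the open set `U`. -/
def OmegaBeurlingOn {E : Type*} [NormedAddCommGroup E] [NormedSpace ℝ E]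
    (ω : ℝ → ℝ) (f : E → ℂ) (U : Set E) : Prop :=
  ContDiffOn ℝ (⊤ : ℕ∞) f U ∧
    ∀ V : Set E, IsOpen V → IsCompact (closure V) → closure V ⊆ U →
      ∀ ρ : ℝ, 0 < ρ → ∃ C : ℝ, 0 < C ∧
        ∀ x ∈ V, ∀ k : ℕ,
          ‖iteratedFDerivWithin ℝ k f U x‖ ≤ C * Real.exp (phiStar ω (ρ * k) / ρ)

/-- The open ellipse `Ω_ε` with vertices `± cosh ε` and co-vertices `± i sinh ε`. -/
def OmegaE (ε : ℝ) : Set ℂ :=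
  {z : ℂ | (z.re / Real.cosh ε) ^ 2 + (z.im / Real.sinh ε) ^ 2 < 1}

/-- The sequence space `Λ^{M}`. -/
def Lambda (M : ℕ → ℝ) : Set (ℕ → ℂ) :=
  {c | ∃ ρ : ℝ, 0 < ρ ∧ ∃ C : ℝ, ∀ k, ‖c k‖ ≤ C * ρ ^ k * M k}

/-- `L(M)`: all non-quasianalytic weight sequences `N ≥ M` with `n = N/k!` log-convex. -/
def LM (M : ℕ → ℝ) : Set (ℕ → ℝ) :=
  {N | IsWeightSeq N ∧ NonQuasianalytic N ∧ (∀ k, M k ≤ N k) ∧ LogConvexSeq (mseq N)}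

/-- A quasianalytic weight sequence `M` is intersectable if `Λ^{M} = ⋂_{N ∈ L(M)} Λ^{N}`. -/
def Intersectable (M : ℕ → ℝ) : Prop := Lambda M = ⋂ N ∈ LM M, Lambda N


/-! ### Log-convex sequences -/

lemma lc_ratio {a : ℕ → ℝ} (hpos : ∀ k, 0 < a k) (hlc : LogConvexSeq a) (i l : ℕ) :
    a (i + 1) * a (i + l) ≤ a (i + l + 1) * a i := by
  induction l with
  | zero => simp
  | succ l ih =>
    have h := hlc (i + l + 1) (by omega)
    simp only [Nat.add_sub_cancel] at h
    have p1 := hpos (i + l)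
    have p2 := hpos (i + l + 1)
    have p3 := hpos i
    have p4 := hpos (i + 1)
    have e1 : i + (l + 1) = i + l + 1 := by omega
    rw [e1]
    refine le_of_mul_le_mul_left ?_ p1
    calc a (i + l) * (a (i + 1) * a (i + l + 1))
        = (a (i + 1) * a (i + l)) * a (i + l + 1) := by ring
      _ ≤ (a (i + l + 1) * a i) * a (i + l + 1) := by gcongr
      _ = a (i + l + 1) ^ 2 * a i := by ring
      _ ≤ (a (i + l) * a (i + l + 1 + 1)) * a i := by gcongr
      _ = a (i + l) * (a (i + l + 1 + 1) * a i) := by ring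

lemma lc_ratio_le {a : ℕ → ℝ} (hpos : ∀ k, 0 < a k) (hlc : LogConvexSeq a) {i l : ℕ}
    (h : i ≤ l) : a (i + 1) * a l ≤ a (l + 1) * a i := by
  obtain ⟨d, rfl⟩ := Nat.exists_eq_add_of_le h
  exact lc_ratio hpos hlc i d

lemma lc_prod {a : ℕ → ℝ} (hpos : ∀ k, 0 < a k) (hlc : LogConvexSeq a) (p q : ℕ) :
    a (p + 1) * a (q + 1) ≤ a 1 * a (p + q + 1) := by
  induction p with
  | zero => simp
  | succ p ih =>
    have h := lc_ratio_le hpos hlc (show p + 1 ≤ p + q + 1 by omega)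
    have p1 := hpos (p + 1)
    have p2 := hpos (p + 1 + 1)
    have p3 := hpos 1
    have e : p + 1 + q + 1 = p + q + 1 + 1 := by omega
    rw [e]
    refine le_of_mul_le_mul_left ?_ p1
    calc a (p + 1) * (a (p + 1 + 1) * a (q + 1))
        = a (p + 1 + 1) * (a (p + 1) * a (q + 1)) := by ring
      _ ≤ a (p + 1 + 1) * (a 1 * a (p + q + 1)) := by gcongr
      _ = a 1 * (a (p + 1 + 1) * a (p + q + 1)) := by ring
      _ ≤ a 1 * (a (p + q + 1 + 1) * a (p + 1)) := by gcongr
      _ = a (p + 1) * (a 1 * a (p + q + 1 + 1)) := by ring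

lemma lc_ratio_unbounded {a : ℕ → ℝ} (hpos : ∀ k, 0 < a k) (h0 : a 0 = 1)
    (hlc : LogConvexSeq a) (hroot : RootTendsToInfty a) (A : ℝ) :
    ∃ K : ℕ, ∀ k, K ≤ k → A * a k ≤ a (k + 1) := by
  obtain ⟨B, hB1, hBA⟩ : ∃ B : ℝ, 1 ≤ B ∧ A ≤ B := ⟨max 1 A, le_max_left _ _, le_max_right _ _⟩
  by_contra! hcon
  have hall : ∀ k, a (k + 1) ≤ B * a k := by
    intro k
    obtain ⟨l, hkl, hl⟩ := hcon k
    have h := lc_ratio_le hpos hlc hkl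
    have h3 : a (l + 1) ≤ B * a l := hl.le.trans (by have := hpos l; gcongr)
    refine le_of_mul_le_mul_right ?_ (hpos l)
    calc a (k + 1) * a l ≤ a (l + 1) * a k := h
      _ ≤ (B * a l) * a k := by have := hpos k; gcongr
      _ = B * a k * a l := by ring
  have hpow : ∀ k, a k ≤ B ^ k := by
    intro k
    induction k with
    | zero => simp [h0]
    | succ k ih =>
      calc a (k + 1) ≤ B * a k := hall k
        _ ≤ B * B ^ k := by gcongr
        _ = B ^ (k + 1) := by ring
  obtain ⟨k, hk1, hk2⟩ := ((hroot.eventually_gt_atTop B).and (eventually_ge_atTop 1)).exists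
  have : a k ^ (1 / (k : ℝ)) ≤ (B ^ k) ^ (1 / (k : ℝ)) :=
    Real.rpow_le_rpow (hpos k).le (hpow k) (by positivity)
  rw [one_div, Real.pow_rpow_inv_natCast (by linarith) (by omega)] at this
  rw [one_div] at hk1
  linarith

/-! ### The sequence estimate behind division -/

lemma seq_prelim {a : ℕ → ℝ} (hpos : ∀ k, 0 < a k) {L σ ρ : ℝ} (hL : 0 < L) (hσ : 0 < σ)
    (hρ : 0 < ρ) (K : ℕ) :
    ∃ B : ℝ, 0 < B ∧ ∀ b : ℕ → ℝ, (∀ k, 0 ≤ b k) →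
      (∀ k, b k ≤ L * σ ^ k * a k +
        ∑ i ∈ Finset.range k, L * σ ^ (i + 1) * a (i + 1) * b (k - 1 - i)) →
      ∀ k, k < K → b k ≤ B * (ρ ^ k * a k) := by
  induction K with
  | zero => exact ⟨1, one_pos, fun b _ _ k hk => absurd hk (by omega)⟩
  | succ K ih =>
    obtain ⟨B, hB, h⟩ := ih
    have hK : 0 < ρ ^ K * a K := by have := hpos K; positivity
    set S : ℝ := L * σ ^ K * a K + ∑ i ∈ Finset.range K,
      L * σ ^ (i + 1) * a (i + 1) * (B * (ρ ^ (K - 1 - i) * a (K - 1 - i))) with hS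
    have hSpos : 0 < S := by
      have := hpos K
      refine add_pos_of_pos_of_nonneg (by positivity) (Finset.sum_nonneg fun i _ => ?_)
      have := hpos (i + 1)
      have := hpos (K - 1 - i)
      positivity
    refine ⟨max B (S / (ρ ^ K * a K)), lt_max_of_lt_left hB, fun b hb hrec k hk => ?_⟩
    rcases Nat.lt_succ_iff_lt_or_eq.mp hk with hk | rfl
    · refine (h b hb hrec k hk).trans ?_
      have := hpos k
      gcongr
      exact le_max_left _ _
    · have h1 : b k ≤ S := by
        refine (hrec k).trans ?_
        rw [hS]
        gcongr with i hi
        · have := hpos (i + 1); positivity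
        · have := Finset.mem_range.mp hi
          exact h b hb hrec _ (by omega)
      calc b k ≤ S := h1
        _ = S / (ρ ^ k * a k) * (ρ ^ k * a k) := (div_mul_cancel₀ S hK.ne').symm
        _ ≤ _ := by gcongr; exact le_max_right _ _

lemma seq_bound {a : ℕ → ℝ} (hpos : ∀ k, 0 < a k) (h0 : a 0 = 1)
    (hlc : LogConvexSeq a) (hroot : RootTendsToInfty a) {L ρ : ℝ} (hL : 0 < L) (hρ : 0 < ρ) :
    ∃ B : ℝ, 0 < B ∧ ∀ b : ℕ → ℝ, (∀ k, 0 ≤ b k) →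
      (∀ k, b k ≤ L * (ρ / 2) ^ k * a k +
        ∑ i ∈ Finset.range k, L * (ρ / 2) ^ (i + 1) * a (i + 1) * b (k - 1 - i)) →
      ∀ k, b k ≤ B * (ρ ^ k * a k) := by
  obtain ⟨K, hK⟩ := lc_ratio_unbounded hpos h0 hlc hroot (2 * L * a 1)
  obtain ⟨B₀, hB₀, hpre⟩ := seq_prelim hpos hL (half_pos hρ) hρ (K + 1)
  set B := max B₀ (2 * (L + L * L)) with hB
  have hBpos : 0 < B := lt_max_of_lt_left hB₀
  refine ⟨B, hBpos, fun b hb hrec k => ?_⟩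
  induction k using Nat.strong_induction_on with
  | _ k ih =>
  rcases lt_or_ge k (K + 1) with hk | hk
  · refine (hpre b hb hrec k hk).trans ?_
    have := hpos k
    gcongr
    exact le_max_left _ _
  · obtain ⟨n, rfl⟩ : ∃ n, k = n + 1 := ⟨k - 1, by omega⟩
    have hb0 : b 0 ≤ L := by simpa [h0] using hrec 0
    have hT : 0 < ρ ^ (n + 1) * a (n + 1) := by have := hpos (n + 1); positivity
    set T := ρ ^ (n + 1) * a (n + 1) with hTdef
    have hn := hK n (by omega)
    have hhalf : (ρ / 2) ^ (n + 1) * a (n + 1) ≤ T := by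
      have := hpos (n + 1)
      rw [hTdef]; gcongr; linarith
    have hterm : ∀ i ∈ Finset.range n,
        L * (ρ / 2) ^ (i + 1) * a (i + 1) * b (n + 1 - 1 - i) ≤ (B * T / 4) * (1 / 2 : ℝ) ^ i := by
      intro i hi
      have hi := Finset.mem_range.mp hi
      obtain ⟨q, rfl⟩ : ∃ q, n = i + q + 1 := ⟨n - i - 1, by omega⟩
      have e : i + q + 1 + 1 - 1 - i = q + 1 := by omega
      rw [e]
      have hih := ih (q + 1) (by omega)
      have hp := lc_prod hpos hlc i q
      have p1 := hpos (i + 1)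
      have p2 := hpos (q + 1)
      calc L * (ρ / 2) ^ (i + 1) * a (i + 1) * b (q + 1)
          ≤ L * (ρ / 2) ^ (i + 1) * a (i + 1) * (B * (ρ ^ (q + 1) * a (q + 1))) := by gcongr
        _ = L * B * ((ρ / 2) ^ (i + 1) * ρ ^ (q + 1)) * (a (i + 1) * a (q + 1)) := by ring
        _ ≤ L * B * ((ρ / 2) ^ (i + 1) * ρ ^ (q + 1)) * (a 1 * a (i + q + 1)) := by gcongr
        _ = B * ((ρ / 2) ^ (i + 1) * ρ ^ (q + 1)) / 2 * (2 * L * a 1 * a (i + q + 1)) := by ring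
        _ ≤ B * ((ρ / 2) ^ (i + 1) * ρ ^ (q + 1)) / 2 * a (i + q + 1 + 1) := by gcongr
        _ = _ := by
          rw [hTdef, div_pow, one_div, inv_pow]
          field_simp
          ring
    have hgeom : ∑ i ∈ Finset.range n, (1 / 2 : ℝ) ^ i ≤ 2 := by
      have := sum_geometric_two_le n
      simpa using this
    have hlast : L * (ρ / 2) ^ (n + 1) * a (n + 1) * b (n + 1 - 1 - n) ≤ L * L * T := by
      have e : n + 1 - 1 - n = 0 := by omega
      rw [e]
      calc L * (ρ / 2) ^ (n + 1) * a (n + 1) * b 0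
          = L * ((ρ / 2) ^ (n + 1) * a (n + 1)) * b 0 := by ring
        _ ≤ L * T * L := by
          have := hb 0
          gcongr
        _ = _ := by ring
    have hsum := Finset.sum_le_sum hterm
    rw [← Finset.mul_sum] at hsum
    have hsum2 : (B * T / 4) * ∑ i ∈ Finset.range n, (1 / 2 : ℝ) ^ i ≤ (B * T / 4) * 2 := by
      gcongr
    have hfirst : L * (ρ / 2) ^ (n + 1) * a (n + 1) ≤ L * T := by
      rw [mul_assoc]; gcongr
    have hBL : 2 * (L + L * L) ≤ B := le_max_right _ _
    have hr := hrec (n + 1)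
    rw [Finset.sum_range_succ] at hr
    have : (L + L * L) * T ≤ B / 2 * T := by gcongr; linarith
    nlinarith

/-! ### the Bang proof of the Denjoy-Carleman theorem -/

/-- One step of the Bang argument. -/
lemma bang_step {N : ℕ → ℝ} (hpos : ∀ k, 0 < N k) (hlc : LogConvexSeq N) {r : ℝ}
    {F : ℕ → ℝ → ℂ} (hF : ∀ k, ∀ x ∈ Ioo (-r) r, HasDerivAt (F k) (F (k + 1) x) x)
    (hb : ∀ x ∈ Ioo (-r) r, ∀ k, ‖F k x‖ ≤ N k) (n : ℕ) {x y : ℝ} (hx : 0 ≤ x) (hxy : x ≤ y)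
    (hyr : y < r) (hstep : y - x ≤ Real.exp (-1) * (N n / N (n + 1)))
    (hP : ∀ k, ‖F k x‖ ≤ Real.exp (k - (n + 1 : ℕ)) * N k) :
    ∀ k, ‖F k y‖ ≤ Real.exp (k - n) * N k := by
  have hmem : ∀ z ∈ Icc x y, z ∈ Ioo (-r) r := fun z hz =>
    ⟨by linarith [hz.1], by linarith [hz.2]⟩
  set c := Real.exp 1 * (N (n + 1) / N n) with hc
  have hcpos : 0 < c := by have := hpos n; have := hpos (n + 1); positivity
  have key : ∀ d k : ℕ, k + d = n + 1 → ∀ z ∈ Icc x y,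
      ‖F k z‖ ≤ Real.exp (k - (n + 1 : ℕ)) * N k * Real.exp (c * (z - x)) := by
    intro d
    induction d with
    | zero =>
      intro k hk z hz
      obtain rfl : k = n + 1 := by omega
      refine (hb z (hmem z hz) _).trans ?_
      rw [sub_self, Real.exp_zero, one_mul]
      refine le_mul_of_one_le_right (hpos _).le (Real.one_le_exp ?_)
      exact mul_nonneg hcpos.le (by linarith [hz.1])
    | succ d ih =>
      intro k hk
      have ih' := ih (k + 1) (by omega)
      refine image_norm_le_of_norm_deriv_right_le_deriv_boundary
        (f' := F (k + 1))
        (B' := fun z => Real.exp (k - (n + 1 : ℕ)) * N k * (Real.exp (c * (z - x)) * c))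
        (fun z hz => (hF k z (hmem z hz)).continuousAt.continuousWithinAt)
        (fun z hz => (hF k z (hmem z ⟨hz.1, hz.2.le⟩)).hasDerivWithinAt) ?_ ?_ ?_
      · simpa using hP k
      · intro z
        have h1 : HasDerivAt (fun z => c * (z - x)) c z := by
          simpa using ((hasDerivAt_id z).sub_const x).const_mul c
        exact h1.exp.const_mul _
      · intro z hz
        refine (ih' z ⟨hz.1, hz.2.le⟩).trans ?_
        have h2 := lc_ratio_le hpos hlc (show k ≤ n by omega)
        have h3 : N (k + 1) ≤ N k * (N (n + 1) / N n) := by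
          rw [mul_div_assoc', le_div_iff₀ (hpos n)]; linarith
        have e : Real.exp ((k + 1 : ℕ) - (n + 1 : ℕ))
            = Real.exp (k - (n + 1 : ℕ)) * Real.exp 1 := by
          rw [← Real.exp_add]; push_cast; ring_nf
        rw [e, hc]
        calc Real.exp (k - (n + 1 : ℕ)) * Real.exp 1 * N (k + 1) * Real.exp (c * (z - x))
            ≤ Real.exp (k - (n + 1 : ℕ)) * Real.exp 1 * (N k * (N (n + 1) / N n))
              * Real.exp (c * (z - x)) := by gcongr
          _ = _ := by ring
  intro k
  rcases le_or_gt k n with hk | hk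
  · refine (key (n + 1 - k) k (by omega) y ⟨hxy, le_rfl⟩).trans ?_
    have h1 : c * (y - x) ≤ 1 := by
      calc c * (y - x) ≤ c * (Real.exp (-1) * (N n / N (n + 1))) := by gcongr
        _ = (Real.exp 1 * Real.exp (-1)) * ((N (n + 1) / N n) * (N n / N (n + 1))) := by
          rw [hc]; ring
        _ = 1 := by
          have := (hpos n).ne'
          have := (hpos (n + 1)).ne'
          rw [← Real.exp_add]; field_simp; simp
    calc Real.exp (k - (n + 1 : ℕ)) * N k * Real.exp (c * (y - x))
        ≤ Real.exp (k - (n + 1 : ℕ)) * N k * Real.exp 1 := by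
          have := hpos k
          gcongr
      _ = (Real.exp (k - (n + 1 : ℕ)) * Real.exp 1) * N k := by ring
      _ = _ := by rw [← Real.exp_add]; push_cast; ring_nf
  · refine (hb y (hmem y ⟨hxy, le_rfl⟩) k).trans ?_
    refine le_mul_of_one_le_left (hpos _).le (Real.one_le_exp ?_)
    have : (n : ℝ) ≤ k := by exact_mod_cast hk.le
    linarith

lemma bang_chain {N : ℕ → ℝ} (hpos : ∀ k, 0 < N k) (hlc : LogConvexSeq N) {r : ℝ}
    {F : ℕ → ℝ → ℂ} (hF : ∀ k, ∀ x ∈ Ioo (-r) r, HasDerivAt (F k) (F (k + 1) x) x)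
    (hb : ∀ x ∈ Ioo (-r) r, ∀ k, ‖F k x‖ ≤ N k) (h0 : ∀ k, F k 0 = 0) (d : ℕ) :
    ∀ n : ℕ, ∀ x, 0 ≤ x → x < r →
      x ≤ Real.exp (-1) * ∑ i ∈ Finset.range d, N (n + i) / N (n + i + 1) →
      ∀ k, ‖F k x‖ ≤ Real.exp (k - n) * N k := by
  induction d with
  | zero =>
    intro n x hx hxr hs k
    have : x = 0 := le_antisymm (by simpa using hs) hx
    rw [this, h0, norm_zero]
    have := hpos k
    positivity
  | succ d ih =>
    intro n x hx hxr hs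
    rw [Finset.sum_range_succ'] at hs
    set s := Real.exp (-1) * ∑ i ∈ Finset.range d, N (n + 1 + i) / N (n + 1 + i + 1) with hsdef
    have hs0 : 0 ≤ s := by
      refine mul_nonneg (Real.exp_pos _).le (Finset.sum_nonneg fun i _ => ?_)
      exact (div_pos (hpos _) (hpos _)).le
    have hs' : x ≤ s + Real.exp (-1) * (N n / N (n + 1)) := by
      refine hs.trans (le_of_eq ?_)
      rw [mul_add, hsdef]
      simp only [add_zero, add_assoc, add_comm 1]
    have hq : 0 ≤ Real.exp (-1) * (N n / N (n + 1)) :=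
      mul_nonneg (Real.exp_pos _).le (div_pos (hpos _) (hpos _)).le
    refine bang_step hpos hlc hF hb n (x := min x s) (le_min hx hs0) (min_le_left _ _) hxr ?_ ?_
    · rcases min_cases x s with ⟨h, _⟩ | ⟨h, _⟩ <;> rw [h] <;> linarith
    · exact ih (n + 1) _ (le_min hx hs0) (lt_of_le_of_lt (min_le_left _ _) hxr) (min_le_right _ _)

lemma bang_right {N : ℕ → ℝ} (hpos : ∀ k, 0 < N k) (hlc : LogConvexSeq N)
    (hq : ¬ Summable fun k : ℕ => N k / N (k + 1)) {r : ℝ}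
    {F : ℕ → ℝ → ℂ} (hF : ∀ k, ∀ x ∈ Ioo (-r) r, HasDerivAt (F k) (F (k + 1) x) x)
    (hb : ∀ x ∈ Ioo (-r) r, ∀ k, ‖F k x‖ ≤ N k) (h0 : ∀ k, F k 0 = 0) {x : ℝ} (hx : 0 ≤ x)
    (hxr : x < r) : F 0 x = 0 := by
  have hle : ∀ n : ℕ, ‖F 0 x‖ ≤ Real.exp (-(n : ℝ)) * N 0 := by
    intro n
    have hq' : ¬ Summable fun k : ℕ => N (n + k) / N (n + k + 1) := by
      intro h
      apply hq
      rw [← summable_nat_add_iff n]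
      simpa only [add_comm, add_left_comm, add_assoc] using h
    have ht := (not_summable_iff_tendsto_nat_atTop_of_nonneg
      (fun k => (div_pos (hpos (n + k)) (hpos (n + k + 1))).le)).mp hq'
    obtain ⟨d, hd⟩ := (ht.eventually_ge_atTop (x * Real.exp 1)).exists
    have := bang_chain hpos hlc hF hb h0 d n x hx hxr (by
      calc x = Real.exp (-1) * (x * Real.exp 1) := by
            rw [mul_comm x, ← mul_assoc, ← Real.exp_add]; simp
        _ ≤ _ := by gcongr) 0
    simpa using this
  have hlim : Tendsto (fun n : ℕ => Real.exp (-(n : ℝ)) * N 0) atTop (nhds (0 * N 0)) :=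
    (Real.tendsto_exp_neg_atTop_nhds_zero.comp tendsto_natCast_atTop_atTop).mul_const _
  have := ge_of_tendsto' hlim hle
  rw [zero_mul] at this
  exact norm_le_zero_iff.mp this

lemma bang {N : ℕ → ℝ} (hpos : ∀ k, 0 < N k) (hlc : LogConvexSeq N)
    (hq : ¬ Summable fun k : ℕ => N k / N (k + 1)) {r : ℝ}
    {F : ℕ → ℝ → ℂ} (hF : ∀ k, ∀ x ∈ Ioo (-r) r, HasDerivAt (F k) (F (k + 1) x) x)
    (hb : ∀ x ∈ Ioo (-r) r, ∀ k, ‖F k x‖ ≤ N k) (h0 : ∀ k, F k 0 = 0) :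
    ∀ x ∈ Ioo (-r) r, F 0 x = 0 := by
  intro x hx
  rcases le_total 0 x with h | h
  · exact bang_right hpos hlc hq hF hb h0 h hx.2
  · have hneg : ∀ y ∈ Ioo (-r) r, -y ∈ Ioo (-r) r := fun y hy =>
      ⟨by linarith [hy.2], by linarith [hy.1]⟩
    have := bang_right hpos hlc hq (F := fun k y => (-1) ^ k * F k (-y)) (r := r)
      (fun k y hy => by
        have h1 := (hF k (-y) (hneg y hy)).scomp y (hasDerivAt_neg y)
        have h2 := h1.const_mul ((-1 : ℂ) ^ k)
        refine h2.congr_deriv ?_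
        simp [pow_succ])
      (fun y hy k => by simpa using hb (-y) (hneg y hy) k)
      (fun k => by simp [h0]) (x := -x) (by linarith) (by linarith [hx.1])
    simpa using this

/-! ### Jets of functions of Beurling class on a symmetric interval -/

/-- `F k` is the `k`-th derivative of `F 0` on `(-r, r)`, with uniform Beurling estimates. -/
structure BJet (M : ℕ → ℝ) (r : ℝ) (F : ℕ → ℝ → ℂ) : Prop where
  der : ∀ k, ∀ x ∈ Ioo (-r) r, HasDerivAt (F k) (F (k + 1) x) x
  bd : ∀ σ : ℝ, 0 < σ → ∃ C : ℝ, 0 < C ∧ ∀ x ∈ Ioo (-r) r, ∀ k : ℕ, ‖F k x‖ ≤ C * σ ^ k * M k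

lemma BJet.mono {M : ℕ → ℝ} {r r' : ℝ} {F : ℕ → ℝ → ℂ} (h : BJet M r F) (hr : r' ≤ r) :
    BJet M r' F := by
  have hsub : ∀ x ∈ Ioo (-r') r', x ∈ Ioo (-r) r := fun x hx =>
    ⟨by linarith [hx.1], by linarith [hx.2]⟩
  refine ⟨fun k x hx => h.der k x (hsub x hx), fun σ hσ => ?_⟩
  obtain ⟨C, hC, hb⟩ := h.bd σ hσ
  exact ⟨C, hC, fun x hx => hb x (hsub x hx)⟩

lemma BJet.continuousOn {M : ℕ → ℝ} {r : ℝ} {F : ℕ → ℝ → ℂ} (h : BJet M r F) (k : ℕ) :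
    ContinuousOn (F k) (Ioo (-r) r) := fun x hx =>
  (h.der k x hx).continuousAt.continuousWithinAt

lemma mul_mem_Ioo_symm {r t x : ℝ} (ht : t ∈ Icc (0 : ℝ) 1) (hx : x ∈ Ioo (-r) r) :
    t * x ∈ Ioo (-r) r := by
  rw [mem_Ioo, ← abs_lt] at *
  rw [abs_mul, abs_of_nonneg ht.1]
  have := abs_nonneg x
  nlinarith [ht.2]

lemma BJet.divX {M : ℕ → ℝ} (hpos : ∀ k, 0 < M k) (hdc : DerivClosed M) {r : ℝ} (hr : 0 < r)
    {F : ℕ → ℝ → ℂ} (h : BJet M r F) (h0 : F 0 0 = 0) :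
    ∃ G : ℕ → ℝ → ℂ, BJet M r G ∧ (∀ x ∈ Ioo (-r) r, F 0 x = x * G 0 x) ∧
      ∀ k : ℕ, ((k : ℂ) + 1) * G k 0 = F (k + 1) 0 := by
  have hI : Set.uIoc (0 : ℝ) 1 ⊆ Icc 0 1 := by
    rw [uIoc_of_le zero_le_one]; exact Ioc_subset_Icc_self
  have hcont : ∀ k l : ℕ, ∀ x ∈ Ioo (-r) r,
      ContinuousOn (fun t : ℝ => (t : ℂ) ^ k * F l (t * x)) (Icc 0 1) := by
    intro k l x hx
    refine ContinuousOn.mul (by fun_prop) ?_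
    exact (h.continuousOn l).comp (by fun_prop) fun t ht => mul_mem_Ioo_symm ht hx
  have hinteg : ∀ k l : ℕ, ∀ x ∈ Ioo (-r) r,
      IntervalIntegrable (fun t : ℝ => (t : ℂ) ^ k * F l (t * x)) volume 0 1 := by
    intro k l x hx
    refine ContinuousOn.intervalIntegrable ?_
    rw [uIcc_of_le zero_le_one]
    exact hcont k l x hx
  have hbd : ∀ k l : ℕ, ∀ B : ℝ, (∀ x ∈ Ioo (-r) r, ‖F l x‖ ≤ B) → ∀ x ∈ Ioo (-r) r,
      ∀ t ∈ Set.uIoc (0 : ℝ) 1, ‖(t : ℂ) ^ k * F l (t * x)‖ ≤ B := by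
    intro k l B hB x hx t ht
    have ht' := hI ht
    have h1 := hB _ (mul_mem_Ioo_symm ht' hx)
    rw [norm_mul, norm_pow, Complex.norm_real, Real.norm_of_nonneg ht'.1]
    calc t ^ k * ‖F l (t * x)‖ ≤ 1 * ‖F l (t * x)‖ := by
          gcongr; exact pow_le_one₀ ht'.1 ht'.2
      _ ≤ B := by rw [one_mul]; exact h1
  refine ⟨fun k x => ∫ t in (0 : ℝ)..1, (t : ℂ) ^ k * F (k + 1) (t * x), ⟨?_, ?_⟩, ?_, ?_⟩
  · intro k x hx
    obtain ⟨C, hC, hb⟩ := h.bd 1 one_pos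
    have hs : Ioo (-r) r ∈ nhds x := isOpen_Ioo.mem_nhds hx
    refine (intervalIntegral.hasDerivAt_integral_of_dominated_loc_of_deriv_le
      (F := fun x t => (t : ℂ) ^ k * F (k + 1) (t * x))
      (F' := fun x t => (t : ℂ) ^ (k + 1) * F (k + 1 + 1) (t * x))
      (bound := fun _ => C * 1 ^ (k + 1 + 1) * M (k + 1 + 1)) hs ?_ (hinteg k (k + 1) x hx) ?_ ?_
      intervalIntegrable_const ?_).2
    · filter_upwards [hs] with y hy
      exact (intervalIntegrable_iff.mp (hinteg k (k + 1) y hy)).aestronglyMeasurable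
    · exact (intervalIntegrable_iff.mp (hinteg (k + 1) (k + 1 + 1) x hx)).aestronglyMeasurable
    · refine Eventually.of_forall fun t ht y hy => ?_
      exact hbd _ _ _ (fun z hz => hb z hz _) y hy t ht
    · refine Eventually.of_forall fun t ht y hy => ?_
      have h1 := h.der (k + 1) _ (mul_mem_Ioo_symm (hI ht) hy)
      have h2 : HasDerivAt (fun y : ℝ => t * y) t y := by
        simpa using (hasDerivAt_id y).const_mul t
      have h3 := (h1.scomp y h2).const_mul ((t : ℂ) ^ k)
      refine h3.congr_deriv ?_
      rw [Complex.real_smul]; ring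
  · intro τ hτ
    obtain ⟨D, hD, hDM⟩ := hdc
    obtain ⟨C, hC, hb⟩ := h.bd (τ / D) (by positivity)
    refine ⟨C * τ, by positivity, fun x hx k => ?_⟩
    have h1 := intervalIntegral.norm_integral_le_of_norm_le_const
      (hbd k (k + 1) _ (fun z hz => hb z hz _) x hx)
    refine h1.trans ?_
    rw [sub_zero, abs_one, mul_one]
    calc C * (τ / D) ^ (k + 1) * M (k + 1)
        ≤ C * (τ / D) ^ (k + 1) * (D ^ (k + 1) * M k) := by gcongr; exact hDM k
      _ = C * τ * τ ^ k * M k := by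
        rw [div_pow]; field_simp; ring
  · intro x hx
    have hd : ∀ t ∈ Set.uIcc (0 : ℝ) 1,
        HasDerivAt (fun t : ℝ => F 0 (t * x)) (x * ((t : ℂ) ^ 0 * F (0 + 1) (t * x))) t := by
      intro t ht
      rw [uIcc_of_le zero_le_one] at ht
      have h1 := h.der 0 _ (mul_mem_Ioo_symm ht hx)
      have h2 : HasDerivAt (fun t : ℝ => t * x) x t := by
        simpa using (hasDerivAt_id t).mul_const x
      refine (h1.scomp t h2).congr_deriv ?_
      rw [Complex.real_smul]; ring
    have := intervalIntegral.integral_eq_sub_of_hasDerivAt hd ((hinteg 0 (0 + 1) x hx).const_mul _)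
    rw [intervalIntegral.integral_const_mul] at this
    rw [this]
    simp [h0]
  · intro k
    have hk : ((k : ℂ) + 1) ≠ 0 := by exact_mod_cast Nat.succ_ne_zero k
    simp only [mul_zero]
    rw [intervalIntegral.integral_mul_const]
    have : (∫ t in (0 : ℝ)..1, (t : ℂ) ^ k) = 1 / ((k : ℂ) + 1) := by
      have h1 : ∀ t : ℝ, (t : ℂ) ^ k = ((t ^ k : ℝ) : ℂ) := fun t => by push_cast; rfl
      simp_rw [h1]
      rw [intervalIntegral.integral_ofReal, integral_pow]
      push_cast
      simp
    rw [this]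
    field_simp

/-- Factorisation at a zero of finite order. -/
lemma BJet.factor {M : ℕ → ℝ} (hpos : ∀ k, 0 < M k) (hdc : DerivClosed M) {r : ℝ} (hr : 0 < r)
    (n : ℕ) : ∀ {F : ℕ → ℝ → ℂ}, BJet M r F → (∀ i < n, F i 0 = 0) → F n 0 ≠ 0 →
    ∃ G : ℕ → ℝ → ℂ, BJet M r G ∧ (∀ x ∈ Ioo (-r) r, F 0 x = x ^ n * G 0 x) ∧ G 0 0 ≠ 0 := by
  induction n with
  | zero => intro F h _ hn; exact ⟨F, h, fun x _ => by simp, hn⟩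
  | succ n ih =>
    intro F h hz hn
    obtain ⟨G, hG, hFG, hG0⟩ := h.divX hpos hdc hr (hz 0 (by omega))
    obtain ⟨H, hH, hGH, hH0⟩ := ih hG (fun i hi => by
        have h1 := hG0 i
        rw [hz (i + 1) (by omega)] at h1
        exact (mul_eq_zero.mp h1).resolve_left (by exact_mod_cast Nat.succ_ne_zero i))
      (fun h1 => hn (by rw [← hG0 n, h1, mul_zero]))
    exact ⟨H, hH, fun x hx => by rw [hFG x hx, hGH x hx]; ring, hH0⟩

/-- If `v ^ j = x ^ e * w` off `0` with `e > 0`, then `v 0 = 0`. -/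
lemma zero_of_pow_eq {r : ℝ} (hr : 0 < r) {v w : ℝ → ℂ} (hv : ContinuousOn v (Ioo (-r) r))
    (hw : ContinuousOn w (Ioo (-r) r)) {j e : ℕ} (he : e ≠ 0)
    (h : ∀ x ∈ Ioo (-r) r, x ≠ 0 → v x ^ j = x ^ e * w x) : v 0 = 0 := by
  have h0 : (0 : ℝ) ∈ Ioo (-r) r := ⟨by linarith, hr⟩
  have hn : Ioo (-r) r ∈ nhds (0 : ℝ) := isOpen_Ioo.mem_nhds h0
  have c1 : ContinuousAt (fun x => v x ^ j) 0 := (hv.continuousAt hn).pow j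
  have c2 : ContinuousAt (fun x : ℝ => (x : ℂ) ^ e * w x) 0 :=
    ContinuousAt.mul (by fun_prop) (hw.continuousAt hn)
  have t1 := c1.tendsto.mono_left (nhdsWithin_le_nhds (s := {0}ᶜ))
  have t2 := c2.tendsto.mono_left (nhdsWithin_le_nhds (s := {0}ᶜ))
  have heq : (fun x => v x ^ j) =ᶠ[nhdsWithin 0 {0}ᶜ] fun x : ℝ => (x : ℂ) ^ e * w x := by
    filter_upwards [nhdsWithin_le_nhds hn, self_mem_nhdsWithin] with x hx hx0
    exact h x hx hx0
  have := tendsto_nhds_unique (t1.congr' heq) t2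
  simp only [Complex.ofReal_zero, zero_pow he, zero_mul] at this
  by_contra hne
  exact pow_ne_zero j hne this

/-- Dividing `H` by `x ^ n` when `H ^ j = (x ^ n * u) ^ (j + 1)`. -/
lemma BJet.factorPow {M : ℕ → ℝ} (hpos : ∀ k, 0 < M k) (hdc : DerivClosed M) {r : ℝ} (hr : 0 < r)
    {H : ℕ → ℝ → ℂ} (hH : BJet M r H) {u : ℝ → ℂ} (hu : ContinuousOn u (Ioo (-r) r)) {n j : ℕ}
    (hrel : ∀ x ∈ Ioo (-r) r, H 0 x ^ j = (x ^ n * u x) ^ (j + 1)) (i : ℕ) (hi : i ≤ n) :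
    ∃ V : ℕ → ℝ → ℂ, BJet M r V ∧ ∀ x ∈ Ioo (-r) r, H 0 x = x ^ i * V 0 x := by
  induction i with
  | zero => exact ⟨H, hH, fun x _ => by simp⟩
  | succ i ih =>
    obtain ⟨V, hV, hHV⟩ := ih (by omega)
    have hV0 : V 0 0 = 0 := by
      refine zero_of_pow_eq hr (hV.continuousOn 0) (w := fun x => u x ^ (j + 1)) (hu.pow _)
        (j := j) (e := n + (n - i) * j) (by omega) fun x hx hx0 => ?_
      have h1 := hrel x hx
      rw [hHV x hx, mul_pow, mul_pow, ← pow_mul, ← pow_mul] at h1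
      have hx0' : (x : ℂ) ^ (i * j) ≠ 0 := pow_ne_zero _ (by exact_mod_cast hx0)
      refine mul_left_cancel₀ hx0' ?_
      rw [h1, ← mul_assoc, ← pow_add]
      congr 2
      obtain ⟨d, rfl⟩ : ∃ d, n = i + d := ⟨n - i, by omega⟩
      rw [Nat.add_sub_cancel_left]; ring
    obtain ⟨G, hG, hVG, _⟩ := hV.divX hpos hdc hr hV0
    exact ⟨G, hG, fun x hx => by rw [hHV x hx, hVG x hx]; ring⟩

/-! ### Passing between jets and `BeurlingOn` -/

lemma BeurlingOn.exists_jet {M : ℕ → ℝ} {g : ℝ → ℂ} {U : Set ℝ} (hU : IsOpen U)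
    (h0 : (0 : ℝ) ∈ U) (h : BeurlingOn M g U) :
    ∃ r : ℝ, 0 < r ∧ ∃ F : ℕ → ℝ → ℂ, F 0 = g ∧ BJet M r F := by
  obtain ⟨r, hr, hsub⟩ := Metric.nhds_basis_closedBall.mem_iff.mp (hU.mem_nhds h0)
  rw [Real.closedBall_eq_Icc, zero_sub, zero_add] at hsub
  have hI : Ioo (-r) r ⊆ U := Ioo_subset_Icc_self.trans hsub
  refine ⟨r, hr, fun k => iteratedDerivWithin k g U, by simp, ?_, ?_⟩
  · intro k x hx
    have hxU := hI hx
    have h1 := h.1.differentiableOn_iteratedDerivWithin (m := k)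
      (by exact_mod_cast ENat.natCast_lt_top k) hU.uniqueDiffOn x hxU
    have h2 := h1.hasDerivWithinAt
    rw [← iteratedDerivWithin_succ] at h2
    exact h2.hasDerivAt (hU.mem_nhds hxU)
  · intro σ hσ
    have hcl : closure (Ioo (-r) r) = Icc (-r) r := closure_Ioo (by linarith)
    obtain ⟨C, hC, hb⟩ := h.2 (Ioo (-r) r) isOpen_Ioo (by rw [hcl]; exact isCompact_Icc)
      (by rw [hcl]; exact hsub) σ hσ
    refine ⟨C, hC, fun x hx k => ?_⟩
    rw [← norm_iteratedFDerivWithin_eq_norm_iteratedDerivWithin]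
    exact hb x hx k

lemma BJet.iteratedDerivWithin_eq {M : ℕ → ℝ} {r : ℝ} {F : ℕ → ℝ → ℂ} (h : BJet M r F) (k : ℕ) :
    ∀ x ∈ Ioo (-r) r, iteratedDerivWithin k (F 0) (Ioo (-r) r) x = F k x := by
  induction k with
  | zero => intro x _; simp
  | succ k ih =>
    intro x hx
    rw [iteratedDerivWithin_succ, derivWithin_congr ih (ih x hx)]
    exact (h.der k x hx).hasDerivWithinAt.derivWithin (isOpen_Ioo.uniqueDiffWithinAt hx)

lemma BJet.contDiffOn {M : ℕ → ℝ} {r : ℝ} {F : ℕ → ℝ → ℂ} (h : BJet M r F) :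
    ContDiffOn ℝ (⊤ : ℕ∞) (F 0) (Ioo (-r) r) := by
  refine contDiffOn_of_differentiableOn_deriv fun m _ x hx => ?_
  exact (h.der m x hx).differentiableAt.differentiableWithinAt.congr
    (h.iteratedDerivWithin_eq m) (h.iteratedDerivWithin_eq m x hx)

/-- Stability under division by a function bounded away from zero. -/
lemma BJet.quotient {M : ℕ → ℝ} (hM0 : M 0 = 1) (hpos : ∀ k, 0 < M k)
    (hmlc : LogConvexSeq (mseq M)) (hmroot : RootTendsToInfty (mseq M)) {r c : ℝ} (hc : 0 < c)
    {U V : ℕ → ℝ → ℂ} (hU : BJet M r U) (hV : BJet M r V)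
    (hUc : ∀ x ∈ Ioo (-r) r, c ≤ ‖U 0 x‖) {f : ℝ → ℂ}
    (hf : ∀ x ∈ Ioo (-r) r, f x = V 0 x / U 0 x) : BeurlingOn M f (Ioo (-r) r) := by
  have hne : ∀ x ∈ Ioo (-r) r, U 0 x ≠ 0 := fun x hx => norm_pos_iff.mp (hc.trans_le (hUc x hx))
  have hfc : ContDiffOn ℝ (⊤ : ℕ∞) f (Ioo (-r) r) :=
    (hV.contDiffOn.mul (hU.contDiffOn.inv hne)).congr fun x hx => by
      rw [hf x hx, div_eq_mul_inv]; rfl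
  refine ⟨hfc, fun S _ _ hS ρ hρ => ?_⟩
  have hmpos : ∀ k, 0 < mseq M k := fun k => div_pos (hpos k) (by positivity)
  have hm0 : mseq M 0 = 1 := by simp [mseq, hM0]
  obtain ⟨C₁, hC₁, hb₁⟩ := hU.bd (ρ / 2) (half_pos hρ)
  obtain ⟨C₂, hC₂, hb₂⟩ := hV.bd (ρ / 2) (half_pos hρ)
  set L := max C₁ C₂ / c with hLdef
  have hL : 0 < L := div_pos (lt_max_of_lt_left hC₁) hc
  have hcL : c * L = max C₁ C₂ := by rw [hLdef]; field_simp
  obtain ⟨B, hB, hseq⟩ := seq_bound hmpos hm0 hmlc hmroot hL hρ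
  refine ⟨B, hB, fun x hxS k => ?_⟩
  have hx : x ∈ Ioo (-r) r := hS (subset_closure hxS)
  have hxn : Ioo (-r) r ∈ nhds x := isOpen_Ioo.mem_nhds hx
  rw [norm_iteratedFDerivWithin_eq_norm_iteratedDerivWithin,
    iteratedDerivWithin_of_isOpen isOpen_Ioo hx]
  have hUk : ∀ i, iteratedDeriv i (U 0) x = U i x := fun i => by
    rw [← iteratedDerivWithin_of_isOpen isOpen_Ioo hx, hU.iteratedDerivWithin_eq i x hx]
  have hleib : ∀ k, V k x = ∑ i ∈ Finset.range (k + 1),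
      (k.choose i : ℂ) * U i x * iteratedDeriv (k - i) f x := by
    intro k
    have h1 : iteratedDeriv k (U 0 * f) x = V k x := by
      rw [← hV.iteratedDerivWithin_eq k x hx, ← iteratedDerivWithin_of_isOpen isOpen_Ioo hx]
      refine iteratedDerivWithin_congr (fun y hy => ?_) hx
      have := hne y hy
      rw [Pi.mul_apply, hf y hy]
      field_simp
    rw [← h1, iteratedDeriv_mul]
    · simp_rw [hUk]
    · exact (hU.contDiffOn.contDiffAt hxn).of_le (by exact_mod_cast le_top)
    · exact (hfc.contDiffAt hxn).of_le (by exact_mod_cast le_top)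
  have hrec : ∀ k : ℕ, ‖iteratedDeriv k f x‖ / k.factorial ≤ L * (ρ / 2) ^ k * mseq M k +
      ∑ i ∈ Finset.range k, L * (ρ / 2) ^ (i + 1) * mseq M (i + 1) *
        (‖iteratedDeriv (k - 1 - i) f x‖ / (k - 1 - i).factorial) := by
    intro k
    have h1 := hleib k
    rw [Finset.sum_range_succ'] at h1
    simp only [Nat.choose_zero_right, Nat.cast_one, one_mul, Nat.sub_zero] at h1
    have h2 : U 0 x * iteratedDeriv k f x = V k x - ∑ i ∈ Finset.range k,
        (k.choose (i + 1) : ℂ) * U (i + 1) x * iteratedDeriv (k - (i + 1)) f x := by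
      rw [h1]; ring
    have h3 : c * ‖iteratedDeriv k f x‖ ≤ ‖V k x‖ + ∑ i ∈ Finset.range k,
        (k.choose (i + 1) : ℝ) * ‖U (i + 1) x‖ * ‖iteratedDeriv (k - (i + 1)) f x‖ := by
      calc c * ‖iteratedDeriv k f x‖ ≤ ‖U 0 x‖ * ‖iteratedDeriv k f x‖ := by
            gcongr; exact hUc x hx
        _ = ‖U 0 x * iteratedDeriv k f x‖ := (norm_mul _ _).symm
        _ ≤ _ := by
          rw [h2]
          refine (norm_sub_le _ _).trans ?_
          gcongr
          refine (norm_sum_le _ _).trans (le_of_eq ?_)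
          refine Finset.sum_congr rfl fun i _ => ?_
          rw [norm_mul, norm_mul, Complex.norm_natCast]
    have hfac : (0 : ℝ) < k.factorial := by positivity
    have hp : 0 < ρ / 2 := half_pos hρ
    have hterm0 : ‖V k x‖ ≤ (c * k.factorial) * (L * (ρ / 2) ^ k * mseq M k) := by
      refine (hb₂ x hx k).trans ?_
      have e : (c * k.factorial) * (L * (ρ / 2) ^ k * mseq M k)
          = max C₁ C₂ * (ρ / 2) ^ k * M k := by
        rw [← hcL, mseq]; field_simp
      rw [e]
      have := hpos k
      gcongr
      exact le_max_right _ _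
    have hterm : ∀ i ∈ Finset.range k,
        (k.choose (i + 1) : ℝ) * ‖U (i + 1) x‖ * ‖iteratedDeriv (k - (i + 1)) f x‖ ≤
        (c * k.factorial) * (L * (ρ / 2) ^ (i + 1) * mseq M (i + 1) *
        (‖iteratedDeriv (k - 1 - i) f x‖ / (k - 1 - i).factorial)) := by
      intro i hi
      have hi := Finset.mem_range.mp hi
      have e0 : k - 1 - i = k - (i + 1) := by omega
      rw [e0]
      have hch : (k.choose (i + 1) : ℝ) * (i + 1).factorial * (k - (i + 1)).factorial
          = k.factorial := by
        exact_mod_cast Nat.choose_mul_factorial_mul_factorial (show i + 1 ≤ k by omega)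
      have e : (c * k.factorial) * (L * (ρ / 2) ^ (i + 1) * mseq M (i + 1) *
          (‖iteratedDeriv (k - (i + 1)) f x‖ / (k - (i + 1)).factorial))
          = (k.choose (i + 1) : ℝ) * (max C₁ C₂ * (ρ / 2) ^ (i + 1) * M (i + 1)) *
            ‖iteratedDeriv (k - (i + 1)) f x‖ := by
        rw [← hcL, ← hch, mseq]
        have : ((i + 1).factorial : ℝ) ≠ 0 := by positivity
        have : ((k - (i + 1)).factorial : ℝ) ≠ 0 := by positivity
        field_simp
      rw [e]
      gcongr
      refine (hb₁ x hx (i + 1)).trans ?_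
      have := hpos (i + 1)
      gcongr
      exact le_max_left _ _
    rw [div_le_iff₀ hfac]
    refine le_of_mul_le_mul_left ?_ hc
    refine h3.trans ((add_le_add hterm0 (Finset.sum_le_sum hterm)).trans (le_of_eq ?_))
    rw [← Finset.mul_sum]
    ring
  have hfin := hseq (fun k => ‖iteratedDeriv k f x‖ / k.factorial)
    (fun k => by positivity) hrec k
  have hfac : (0 : ℝ) < k.factorial := by positivity
  rw [div_le_iff₀ hfac] at hfin
  refine hfin.trans (le_of_eq ?_)
  rw [mseq]
  field_simp

/-- the ring of germs at `0 ∈ ℝ` of `E^{(M)}`-functions has property (D)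
for a quasianalytic derivation closed weight sequence `M` with `m` log-convex and
`m_k^{1/k} → ∞`. -/
theorem statement5 (M : ℕ → ℝ)
    (hM : IsWeightSeq M) (hq : Quasianalytic M) (hdc : DerivClosed M)
    (hmlc : LogConvexSeq (mseq M)) (hmroot : RootTendsToInfty (mseq M))
    (f : ℝ → ℂ) (j : ℕ) (hj : 1 ≤ j)
    (h1 : ∃ U : Set ℝ, IsOpen U ∧ (0 : ℝ) ∈ U ∧ BeurlingOn M (f ^ j) U)
    (h2 : ∃ U : Set ℝ, IsOpen U ∧ (0 : ℝ) ∈ U ∧ BeurlingOn M (f ^ (j + 1)) U) :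
    ∃ U : Set ℝ, IsOpen U ∧ (0 : ℝ) ∈ U ∧ BeurlingOn M f U := by
  obtain ⟨hM0, hpos, -, hMlc, -⟩ := hM
  obtain ⟨U₁, hU₁, h0U₁, hg⟩ := h1
  obtain ⟨U₂, hU₂, h0U₂, hh⟩ := h2
  obtain ⟨r₁, hr₁, G, hG0, hG⟩ := hg.exists_jet hU₁ h0U₁
  obtain ⟨r₂, hr₂, H, hH0, hH⟩ := hh.exists_jet hU₂ h0U₂
  obtain ⟨r, hr, hrr₁, hrr₂⟩ : ∃ r : ℝ, 0 < r ∧ r ≤ r₁ ∧ r ≤ r₂ :=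
    ⟨min r₁ r₂, lt_min hr₁ hr₂, min_le_left _ _, min_le_right _ _⟩
  replace hG := hG.mono hrr₁
  replace hH := hH.mono hrr₂
  have hj0 : j ≠ 0 := by omega
  have hzero : ∀ {ρ : ℝ}, 0 < ρ → (0 : ℝ) ∈ Ioo (-ρ) ρ := fun h => ⟨by linarith, h⟩
  by_cases hflat : ∀ k, G k 0 = 0
  · -- `f ^ j` is flat at `0`, so it vanishes near `0` by quasianalyticity
    obtain ⟨C, hC, hb⟩ := hG.bd 1 one_pos
    have hlcN : LogConvexSeq fun k => C * M k := by
      intro k hk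
      have h := hMlc k hk
      have h' := mul_le_mul_of_nonneg_left h (sq_nonneg C)
      nlinarith
    have hv := bang (N := fun k => C * M k) (fun k => mul_pos hC (hpos k)) hlcN (by
        have e : (fun k => C * M k / (C * M (k + 1))) = fun k => M k / M (k + 1) := by
          funext k
          exact mul_div_mul_left _ _ hC.ne'
        rw [e]
        exact hq) hG.der (fun x hx k => by simpa using hb x hx k) hflat
    have hfz : ∀ x ∈ Ioo (-r) r, f x = 0 := fun x hx => by
      have h := hv x hx
      rw [hG0, Pi.pow_apply] at h
      exact (pow_eq_zero_iff hj0).mp h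
    have one_jet : BJet M r (fun k _ => if k = 0 then 1 else 0) := by
      refine ⟨fun k x _ => by simpa using hasDerivAt_const x _, fun σ hσ => ⟨1, one_pos, ?_⟩⟩
      intro x _ k
      rcases k with _ | k
      · simp [hM0]
      · have := hpos (k + 1)
        simp only [Nat.succ_ne_zero, if_false, norm_zero]
        positivity
    have zero_jet : BJet M r (fun _ _ => 0) := by
      refine ⟨fun k x _ => hasDerivAt_const x _, fun σ hσ => ⟨1, one_pos, fun x _ k => ?_⟩⟩
      have := hpos k
      rw [norm_zero]
      positivity
    exact ⟨Ioo (-r) r, isOpen_Ioo, hzero hr, BJet.quotient hM0 hpos hmlc hmroot one_pos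
      one_jet zero_jet (fun x _ => by simp) (fun x hx => by simp [hfz x hx])⟩
  · push Not at hflat
    classical
    obtain ⟨n, hn, hmin⟩ : ∃ n, G n 0 ≠ 0 ∧ ∀ i < n, G i 0 = 0 :=
      ⟨Nat.find hflat, Nat.find_spec hflat, fun i hi => not_not.mp (Nat.find_min hflat hi)⟩
    obtain ⟨u, hu, hGu, hu0⟩ := hG.factor hpos hdc hr n hmin hn
    have hrel : ∀ x ∈ Ioo (-r) r, H 0 x ^ j = (x ^ n * u 0 x) ^ (j + 1) := by
      intro x hx
      rw [← hGu x hx, hG0, hH0, Pi.pow_apply, Pi.pow_apply, ← pow_mul, ← pow_mul, mul_comm]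
    obtain ⟨v, hv, hHv⟩ := hH.factorPow hpos hdc hr (hu.continuousOn 0) hrel n le_rfl
    -- shrink the interval so that `u` is bounded away from zero
    have hcont : ContinuousAt (u 0) 0 := (hu.der 0 0 (hzero hr)).continuousAt
    have hupos : 0 < ‖u 0 0‖ := norm_pos_iff.mpr hu0
    have hev : ∀ᶠ x in nhds (0 : ℝ), ‖u 0 0‖ / 2 < ‖u 0 x‖ :=
      hcont.norm.eventually (lt_mem_nhds (half_lt_self hupos))
    obtain ⟨s, hs, hsu⟩ := Metric.eventually_nhds_iff.mp hev
    obtain ⟨t, ht, hts, htr⟩ : ∃ t : ℝ, 0 < t ∧ t ≤ s ∧ t ≤ r :=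
      ⟨min s r, lt_min hs hr, min_le_left _ _, min_le_right _ _⟩
    have hsub : ∀ x ∈ Ioo (-t) t, x ∈ Ioo (-r) r := fun x hx =>
      ⟨by linarith [hx.1], by linarith [hx.2]⟩
    have hlow : ∀ x ∈ Ioo (-t) t, ‖u 0 0‖ / 2 ≤ ‖u 0 x‖ := fun x hx => by
      refine (hsu ?_).le
      rw [Real.dist_eq, sub_zero, abs_lt]
      exact ⟨by linarith [hx.1], by linarith [hx.2]⟩
    refine ⟨Ioo (-t) t, isOpen_Ioo, hzero ht, BJet.quotient hM0 hpos hmlc hmroot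
      (half_pos hupos) (hu.mono htr) (hv.mono htr) hlow fun x hx => ?_⟩
    have hux : u 0 x ≠ 0 := norm_pos_iff.mp ((half_pos hupos).trans_le (hlow x hx))
    have e1 := hGu x (hsub x hx)
    have e2 := hHv x (hsub x hx)
    rw [hG0, Pi.pow_apply] at e1
    rw [hH0, Pi.pow_apply] at e2
    rw [eq_div_iff hux]
    by_cases hxn : (x : ℂ) ^ n = 0
    · -- here `x = 0` and `n ≠ 0`
      have hn0 : n ≠ 0 := by
        rintro rfl
        simp at hxn
      have hx0 : x = 0 := by exact_mod_cast (pow_eq_zero_iff hn0).mp hxn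
      rw [hxn, zero_mul] at e1
      have hfx : f x = 0 := (pow_eq_zero_iff hj0).mp e1
      have hv0 : v 0 0 = 0 := by
        refine zero_of_pow_eq hr (hv.continuousOn 0) (w := fun x => u 0 x ^ (j + 1))
          ((hu.continuousOn 0).pow _) (j := j) (e := n) hn0 fun y hy hy0 => ?_
        have h := hrel y hy
        rw [hHv y hy] at h
        have hy0' : ((y : ℂ) ^ n) ^ j ≠ 0 :=
          pow_ne_zero _ (pow_ne_zero _ (by exact_mod_cast hy0))
        refine mul_left_cancel₀ hy0' ?_
        rw [← mul_pow, h]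
        ring
      rw [hfx, hx0, hv0, zero_mul]
    · refine mul_left_cancel₀ hxn ?_
      rw [← e2, pow_succ, e1]
      ring
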